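/- For every integer T ≥ 1 and every x ∈ ℝ^T, the gradient of the hard-instance chain function is uniformly bounded in sup norm: ‖∇F_T(x)‖_∞ ≤ 23, i.e. |∂_i F_T(x)| ≤ 23 for every coordinate i ∈ {1, …, T}. -/

import Mathlib

open MeasureTheory

/-- The scalar function `Ψ` of the hard-instance construction. -/
noncomputable def Psi (t : ℝ) : ℝ :=
  if t ≤ 1 / 2 then 0 else Real.exp (1 - 1 / (2 * t - 1) ^ 2)

/-- The scalar function `Φ(t) = √e ∫_{−∞}^t e^{−τ²/2} dτ` of the hard-instance
construction. -/
noncomputable def Phi (t : ℝ) : ℝ :=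
  Real.sqrt (Real.exp 1) * ∫ τ in Set.Iic t, Real.exp (-τ ^ 2 / 2)

/-- The hard-instance chain function `F_T` on `ℝ^{T+1}` (so the paper's dimension `T ≥ 1`
is `T + 1` here; the paper's coordinate `xᵢ`, `1 ≤ i ≤ T`, is the zero-based coordinate
`x (i−1)`). -/
noncomputable def chainF (T : ℕ) (x : EuclideanSpace ℝ (Fin (T + 1))) : ℝ :=
  -Psi 1 * Phi (x 0) +
    ∑ i : Fin T,
      (Psi (-(x i.castSucc)) * Phi (-(x i.succ)) - Psi (x i.castSucc) * Phi (x i.succ))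

/-- `prog α x` is the largest one-based index `i ∈ {0, 1, …, n}` such that `|xᵢ| > α`
(with the paper's convention `x₀ ≡ 1`, so the value `0` is allowed and returned when no
coordinate exceeds `α`). -/
noncomputable def prog {n : ℕ} (α : ℝ) (x : EuclideanSpace ℝ (Fin n)) : ℕ :=
  (Finset.univ.filter fun i : Fin n => α < |x i|).sup fun i => (i : ℕ) + 1

noncomputable def DPsi (t : ℝ) : ℝ :=
  if t ≤ 1 / 2 then 0 else Real.exp (1 - 1 / (2 * t - 1) ^ 2) * (4 / (2 * t - 1) ^ 3)

noncomputable def DPhi (t : ℝ) : ℝ :=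
  Real.sqrt (Real.exp 1) * Real.exp (-t ^ 2 / 2)

lemma Psi_nonneg (t : ℝ) : 0 ≤ Psi t := by
  unfold Psi; split_ifs <;> positivity

lemma Psi_le (t : ℝ) : Psi t ≤ Real.exp 1 := by
  unfold Psi; split_ifs
  · positivity
  · apply Real.exp_le_exp.2
    have : 0 ≤ 1 / (2 * t - 1) ^ 2 := by positivity
    linarith

lemma Psi_quad (t : ℝ) : Psi t ≤ Real.exp 1 * 4 * (t - 1 / 2) ^ 2 := by
  unfold Psi; split_ifs with h
  · positivity
  · have hs : 0 < (2 * t - 1) ^ 2 := by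
      have : 0 < 2 * t - 1 := by linarith
      positivity
    rw [Real.exp_sub]
    have h1 : 1 / (2 * t - 1) ^ 2 ≤ Real.exp (1 / (2 * t - 1) ^ 2) := by
      linarith [Real.add_one_le_exp (1 / (2 * t - 1) ^ 2)]
    rw [div_le_iff₀ (Real.exp_pos _)]
    calc Real.exp 1 = Real.exp 1 * 4 * (t - 1 / 2) ^ 2 * (1 / (2 * t - 1) ^ 2) := by
          have e : (2 * t - 1) ^ 2 = 4 * (t - 1 / 2) ^ 2 := by ring
          rw [e] at hs ⊢
          have : (t - 1 / 2) ^ 2 ≠ 0 := by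
            intro h0; rw [h0] at hs; simp at hs
          rw [mul_assoc (Real.exp 1), mul_assoc (Real.exp 1), mul_one_div_cancel hs.ne', mul_one]
      _ ≤ _ := by gcongr

lemma hasDerivAt_Psi (t : ℝ) : HasDerivAt Psi (DPsi t) t := by
  rcases lt_trichotomy t (1 / 2) with h | h | h
  · have e : DPsi t = 0 := by unfold DPsi; rw [if_pos h.le]
    rw [e]
    refine (hasDerivAt_const t (0 : ℝ)).congr_of_eventuallyEq ?_
    filter_upwards [Iio_mem_nhds h] with y hy
    unfold Psi; rw [if_pos (le_of_lt hy)]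
  · have e : DPsi t = 0 := by unfold DPsi; rw [if_pos h.le]
    rw [e]
    have hb : Psi =O[nhds t] fun x => ‖x - t‖ ^ 2 := by
      refine Asymptotics.IsBigO.of_bound (Real.exp 1 * 4) (Filter.Eventually.of_forall fun x => ?_)
      rw [Real.norm_of_nonneg (Psi_nonneg x), Real.norm_of_nonneg (by positivity),
        Real.norm_eq_abs, sq_abs, h]
      exact Psi_quad x
    have := hb.hasFDerivAt (𝕜 := ℝ) (by norm_num)
    simpa using this.hasDerivAt
  · have e : DPsi t = Real.exp (1 - 1 / (2 * t - 1) ^ 2) * (4 / (2 * t - 1) ^ 3) := by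
      unfold DPsi; rw [if_neg (not_le.2 h)]
    rw [e]
    have hs : 2 * t - 1 ≠ 0 := by
      have : 0 < 2 * t - 1 := by linarith
      exact this.ne'
    have h1 : HasDerivAt (fun y : ℝ => 2 * y - 1) 2 t := by
      simpa using ((hasDerivAt_id t).const_mul 2).sub_const 1
    have h2 := ((h1.pow 2).inv (pow_ne_zero 2 hs)).const_sub 1 |>.exp
    have h3 : HasDerivAt (fun y : ℝ => Real.exp (1 - 1 / (2 * y - 1) ^ 2))
        (Real.exp (1 - 1 / (2 * t - 1) ^ 2) * (4 / (2 * t - 1) ^ 3)) t := by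
      convert h2 using 1
      · ext y; simp
      · simp only [Pi.pow_apply, Pi.inv_apply, one_div]
        congr 1
        field_simp
        norm_num
    refine h3.congr_of_eventuallyEq ?_
    filter_upwards [Ioi_mem_nhds h] with y hy
    unfold Psi; rw [if_neg (not_le.2 hy)]

lemma gauss_int : Integrable (fun τ : ℝ => Real.exp (-τ ^ 2 / 2)) := by
  have := integrable_exp_neg_mul_sq (b := 1 / 2) (by norm_num)
  refine this.congr (Filter.Eventually.of_forall fun x => ?_)
  simp only; congr 1; ring

lemma gauss_val : ∫ τ : ℝ, Real.exp (-τ ^ 2 / 2) = Real.sqrt (2 * Real.pi) := by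
  have := integral_gaussian (1 / 2)
  rw [show Real.pi / (1 / 2) = 2 * Real.pi by ring] at this
  rw [← this]
  congr 1; ext x; congr 1; ring

lemma hasDerivAt_Phi (t : ℝ) : HasDerivAt Phi (DPhi t) t := by
  unfold DPhi
  have hc : Continuous (fun τ : ℝ => Real.exp (-τ ^ 2 / 2)) := by fun_prop
  have e : Phi = fun t => Real.sqrt (Real.exp 1) *
      ((∫ τ in Set.Iic (0 : ℝ), Real.exp (-τ ^ 2 / 2)) + ∫ τ in (0 : ℝ)..t, Real.exp (-τ ^ 2 / 2)) := by
    ext t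
    unfold Phi
    rw [← intervalIntegral.integral_Iic_sub_Iic gauss_int.integrableOn gauss_int.integrableOn]
    ring
  rw [e]
  exact ((hc.integral_hasStrictDerivAt 0 t).hasDerivAt.const_add _).const_mul _

lemma Phi_nonneg (t : ℝ) : 0 ≤ Phi t := by
  unfold Phi
  exact mul_nonneg (Real.sqrt_nonneg _) (integral_nonneg fun _ => (Real.exp_pos _).le)

lemma Phi_sq (t : ℝ) : Phi t ^ 2 ≤ Real.exp 1 * (2 * Real.pi) := by
  have h : ∫ τ in Set.Iic t, Real.exp (-τ ^ 2 / 2) ≤ Real.sqrt (2 * Real.pi) := by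
    rw [← gauss_val]
    exact setIntegral_le_integral gauss_int (Filter.Eventually.of_forall fun _ => (Real.exp_pos _).le)
  have h0 : 0 ≤ ∫ τ in Set.Iic t, Real.exp (-τ ^ 2 / 2) :=
    integral_nonneg fun _ => (Real.exp_pos _).le
  unfold Phi
  rw [mul_pow, Real.sq_sqrt (Real.exp_pos _).le]
  have := pow_le_pow_left₀ h0 h 2
  rw [Real.sq_sqrt (by positivity)] at this
  gcongr

lemma DPhi_nonneg (t : ℝ) : 0 ≤ DPhi t := by unfold DPhi; positivity

lemma DPhi_sq (t : ℝ) : DPhi t ^ 2 ≤ Real.exp 1 := by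
  unfold DPhi
  rw [mul_pow, Real.sq_sqrt (Real.exp_pos _).le]
  have : Real.exp (-t ^ 2 / 2) ≤ 1 := Real.exp_le_one_iff.2 (by nlinarith [sq_nonneg t])
  have h2 := pow_le_one₀ (n := 2) (Real.exp_pos (-t ^ 2 / 2)).le this
  nlinarith [Real.exp_pos 1]

lemma DPsi_nonneg (t : ℝ) : 0 ≤ DPsi t := by
  unfold DPsi; split_ifs with h
  · exact le_rfl
  · have : 0 < 2 * t - 1 := by linarith
    positivity

lemma DPsi_sq (t : ℝ) : DPsi t ^ 2 * Real.exp 1 ≤ 54 := by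
  unfold DPsi; split_ifs with h
  · norm_num
  · have hs : 0 < 2 * t - 1 := by linarith
    set s := 2 * t - 1
    obtain ⟨u, hu⟩ : ∃ u, u = 1 / s ^ 2 := ⟨_, rfl⟩
    have hu0 : 0 < u := by rw [hu]; positivity
    have e1 : (4 / s ^ 3) ^ 2 = 16 * u ^ 3 := by rw [hu]; field_simp; norm_num
    rw [mul_pow, e1, ← hu]
    have h1 : 2 * u / 3 ≤ Real.exp (2 * u / 3 - 1) := by
      linarith [Real.add_one_le_exp (2 * u / 3 - 1)]
    have h2 := pow_le_pow_left₀ (by positivity) h1 3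
    have e2 : Real.exp (1 - u) ^ 2 * Real.exp 1 * Real.exp (2 * u / 3 - 1) ^ 3 = 1 := by
      rw [← Real.exp_nat_mul, ← Real.exp_nat_mul, ← Real.exp_add, ← Real.exp_add,
        ← Real.exp_zero]
      congr 1; push_cast; ring
    have h3 := mul_le_mul_of_nonneg_left h2
      (by positivity : 0 ≤ Real.exp (1 - u) ^ 2 * Real.exp 1)
    rw [e2] at h3
    nlinarith [h3]

lemma le_of_sq_le_sq_nn {a b : ℝ} (h : a ^ 2 ≤ b ^ 2) (hb : 0 ≤ b) : a ≤ b :=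
  (abs_le.1 (abs_le_of_sq_le_sq h hb)).2

lemma bound1 (t s : ℝ) : DPsi t * Phi s ≤ 18.43 := by
  refine le_of_sq_le_sq_nn ?_ (by norm_num)
  have h1 := DPsi_sq t
  have h2 := Phi_sq s
  have := Real.pi_lt_d4
  calc (DPsi t * Phi s) ^ 2 = DPsi t ^ 2 * Phi s ^ 2 := by ring
    _ ≤ DPsi t ^ 2 * (Real.exp 1 * (2 * Real.pi)) := by gcongr
    _ = (DPsi t ^ 2 * Real.exp 1) * (2 * Real.pi) := by ring
    _ ≤ 54 * (2 * Real.pi) := by gcongr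
    _ ≤ _ := by norm_num at *; linarith

lemma bound2 (t s : ℝ) : Psi t * DPhi s ≤ 4.49 := by
  refine le_of_sq_le_sq_nn ?_ (by norm_num)
  have h1 := Psi_le t
  have h0 := Psi_nonneg t
  have h2 := DPhi_sq s
  have := Real.exp_one_lt_d9
  calc (Psi t * DPhi s) ^ 2 = Psi t ^ 2 * DPhi s ^ 2 := by ring
    _ ≤ Real.exp 1 ^ 2 * Real.exp 1 := by gcongr
    _ = Real.exp 1 ^ 3 := by ring
    _ ≤ 2.7182818286 ^ 3 := by gcongr
    _ ≤ _ := by norm_num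

lemma boundA (t s : ℝ) : |-(DPsi (-t) * Phi (-s)) - DPsi t * Phi s| ≤ 18.43 := by
  have a := bound1 t s
  have b := bound1 (-t) (-s)
  have a0 := mul_nonneg (DPsi_nonneg t) (Phi_nonneg s)
  have b0 := mul_nonneg (DPsi_nonneg (-t)) (Phi_nonneg (-s))
  rw [abs_le]
  rcases le_total t 0 with h | h
  · have : DPsi t = 0 := by unfold DPsi; rw [if_pos (by linarith)]
    rw [this] at *
    constructor <;> linarith
  · have : DPsi (-t) = 0 := by unfold DPsi; rw [if_pos (by linarith)]
    rw [this] at *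
    constructor <;> linarith

lemma boundB (t s : ℝ) : |-(Psi (-t) * DPhi (-s)) - Psi t * DPhi s| ≤ 4.49 := by
  have a := bound2 t s
  have b := bound2 (-t) (-s)
  have a0 := mul_nonneg (Psi_nonneg t) (DPhi_nonneg s)
  have b0 := mul_nonneg (Psi_nonneg (-t)) (DPhi_nonneg (-s))
  rw [abs_le]
  rcases le_total t 0 with h | h
  · have : Psi t = 0 := by unfold Psi; rw [if_pos (by linarith)]
    rw [this] at *
    constructor <;> linarith
  · have : Psi (-t) = 0 := by unfold Psi; rw [if_pos (by linarith)]
    rw [this] at *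
    constructor <;> linarith

/-- The gradient of the chain function `F_T` is bounded by `23` in the
sup norm: every coordinate of `∇F_T(x)` has absolute value at most `23` (stated for
dimension `T + 1`, i.e. for every paper dimension `T ≥ 1`). -/
theorem chainF_gradient_sup_norm_le (T : ℕ) :
    ∀ x : EuclideanSpace ℝ (Fin (T + 1)), ∀ i : Fin (T + 1),
      |gradient (chainF T) x i| ≤ 23 := by
  intro x i
  by_cases hd : DifferentiableAt ℝ (chainF T) x
  swap
  · rw [gradient_eq_zero_of_not_differentiableAt hd]; simp
  set v : EuclideanSpace ℝ (Fin (T + 1)) := EuclideanSpace.single i (1 : ℝ) with hv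
  have hg : gradient (chainF T) x i = fderiv ℝ (chainF T) x v := by
    have h1 : inner ℝ (gradient (chainF T) x) v = fderiv ℝ (chainF T) x v := by
      unfold gradient
      rw [InnerProductSpace.toDual_symm_apply]
    rw [← h1, hv, EuclideanSpace.inner_single_right]
    simp
  have hc : ∀ j, HasDerivAt (fun t : ℝ => (x + t • v) j) (if j = i then (1 : ℝ) else 0) 0 := by
    intro j
    have : HasDerivAt (fun t : ℝ => x j + t * (if j = i then (1 : ℝ) else 0))
        (if j = i then (1 : ℝ) else 0) 0 := by
      simpa using ((hasDerivAt_id (0 : ℝ)).mul_const (if j = i then (1 : ℝ) else 0)).const_add (x j)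
    convert this using 2
    simp [hv]
  have hz : ∀ j, (x + (0 : ℝ) • v) j = x j := by intro j; simp
  have hP : ∀ j, HasDerivAt (fun t : ℝ => Psi ((x + t • v) j))
      (DPsi (x j) * (if j = i then (1 : ℝ) else 0)) 0 := fun j =>
    HasDerivAt.comp (h₂ := Psi) (0 : ℝ) (by rw [hz]; exact hasDerivAt_Psi _) (hc j)
  have hPn : ∀ j, HasDerivAt (fun t : ℝ => Psi (-(x + t • v) j))
      (DPsi (-x j) * (-(if j = i then (1 : ℝ) else 0))) 0 := fun j =>
    HasDerivAt.comp (h₂ := Psi) (0 : ℝ) (h := fun t : ℝ => -(x + t • v) j)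
      (by rw [hz]; exact hasDerivAt_Psi _) (hc j).neg
  have hQ : ∀ j, HasDerivAt (fun t : ℝ => Phi ((x + t • v) j))
      (DPhi (x j) * (if j = i then (1 : ℝ) else 0)) 0 := fun j =>
    HasDerivAt.comp (h₂ := Phi) (0 : ℝ) (by rw [hz]; exact hasDerivAt_Phi _) (hc j)
  have hQn : ∀ j, HasDerivAt (fun t : ℝ => Phi (-(x + t • v) j))
      (DPhi (-x j) * (-(if j = i then (1 : ℝ) else 0))) 0 := fun j =>
    HasDerivAt.comp (h₂ := Phi) (0 : ℝ) (h := fun t : ℝ => -(x + t • v) j)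
      (by rw [hz]; exact hasDerivAt_Phi _) (hc j).neg
  have hF := ((hQ 0).const_mul (-Psi 1)).add (HasDerivAt.fun_sum (u := Finset.univ)
    fun (j : Fin T) _ => ((hPn j.castSucc).mul (hQn j.succ)).sub ((hP j.castSucc).mul (hQ j.succ)))
  have hL : HasDerivAt (fun t : ℝ => chainF T (x + t • v)) (fderiv ℝ (chainF T) x v) 0 :=
    hd.hasFDerivAt.hasLineDerivAt v
  have hE := hL.unique hF
  rw [hg, hE]
  simp only [hz]
  have hS : ∑ j : Fin T, (DPsi (-x j.castSucc) * (-(if j.castSucc = i then (1 : ℝ) else 0)) * Phi (-x j.succ)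
        + Psi (-x j.castSucc) * (DPhi (-x j.succ) * (-(if j.succ = i then (1 : ℝ) else 0)))
        - (DPsi (x j.castSucc) * (if j.castSucc = i then (1 : ℝ) else 0) * Phi (x j.succ)
        + Psi (x j.castSucc) * (DPhi (x j.succ) * (if j.succ = i then (1 : ℝ) else 0))))
      = (∑ j : Fin T, (if j.castSucc = i then
          (-(DPsi (-x j.castSucc) * Phi (-x j.succ)) - DPsi (x j.castSucc) * Phi (x j.succ)) else 0))
      + ∑ j : Fin T, (if j.succ = i then
          (-(Psi (-x j.castSucc) * DPhi (-x j.succ)) - Psi (x j.castSucc) * DPhi (x j.succ)) else 0) := by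
    rw [← Finset.sum_add_distrib]
    refine Finset.sum_congr rfl fun j _ => ?_
    split_ifs <;> ring
  rw [hS]
  have hA : |∑ j : Fin T, (if j.castSucc = i then
          (-(DPsi (-x j.castSucc) * Phi (-x j.succ)) - DPsi (x j.castSucc) * Phi (x j.succ)) else 0)|
      ≤ 18.43 := by
    induction i using Fin.lastCases with
    | last => simp [Fin.castSucc_ne_last]; norm_num
    | cast k =>
      simp only [Fin.castSucc_inj, Finset.sum_ite_eq', Finset.mem_univ, if_true]
      exact boundA _ _
  have hB : |-Psi 1 * (DPhi (x 0) * (if 0 = i then (1 : ℝ) else 0)) +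
      ∑ j : Fin T, (if j.succ = i then
          (-(Psi (-x j.castSucc) * DPhi (-x j.succ)) - Psi (x j.castSucc) * DPhi (x j.succ)) else 0)|
      ≤ 4.49 := by
    induction i using Fin.cases with
    | zero =>
      simp only [Fin.succ_ne_zero, if_false, Finset.sum_const_zero, add_zero, if_true, mul_one]
      rw [neg_mul, abs_neg, abs_of_nonneg (mul_nonneg (Psi_nonneg _) (DPhi_nonneg _))]
      exact bound2 _ _
    | succ k =>
      simp only [Fin.succ_inj, Finset.sum_ite_eq', Finset.mem_univ, if_true,
        (Fin.succ_ne_zero k).symm, if_false, mul_zero, zero_add]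
      exact boundB _ _
  rw [abs_le] at *
  constructor <;> norm_num at hA hB ⊢ <;> linarith [hA.1, hA.2, hB.1, hB.2]
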